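/- Let a, b, c be complex numbers such that (a+b+3)/2 is not a nonpositive integer, 2c−1 is not a nonpositive integer, and Re(2c − a − b) > 0. Then ₃F₂(a, b, c; (a+b+3)/2, 2c−1; 1) = ₃F₂(a, b, c; (a+b+3)/2, 2c; 1) + (ab/((2c−1)(a+b+3))) · ₃F₂(a+1, b+1, c+1; (a+b+5)/2, 2c+1; 1). -/

import Mathlib

open scoped Nat

/-- The generalized hypergeometric series `₃F₂(a, b, c; d, e; 1)`, defined as
`∑ₙ (a)ₙ(b)ₙ(c)ₙ / ((d)ₙ(e)ₙ n!)` where `(α)ₙ` is the Pochhammer symbol. -/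
noncomputable def hyp3F2 (a b c d e : ℂ) : ℂ :=
  ∑' n : ℕ,
    ((ascPochhammer ℂ n).eval a * (ascPochhammer ℂ n).eval b * (ascPochhammer ℂ n).eval c) /
      ((ascPochhammer ℂ n).eval d * (ascPochhammer ℂ n).eval e * (n ! : ℂ))

/-!
With `tₙ(e)` the general term of `₃F₂(a, b, c; d, e; 1)`, the identity `(e)ₙ (e + n) = e (e + 1)ₙ`
gives `tₙ(e) = tₙ(e + 1) + (n / e) tₙ(e + 1)`. Multiplying the general term by `n` is the Euler
operator `z d/dz`, which turns a hypergeometric series into a multiple of the one with all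
parameters raised by one, so summing over `n` yields the contiguous relation between
`e` and `e + 1`. The series converge because Euler's limit formula for `Γ` gives
`|(s)ₙ| ≍ n ^ (Re s - 1) n!`.
-/

open Filter Asymptotics
open scoped Topology

section AscPochhammer

variable {R : Type*} [CommSemiring R]

theorem ascPochhammer_succ_eval_left (n : ℕ) (s : R) :
    (ascPochhammer R (n + 1)).eval s = s * (ascPochhammer R n).eval (s + 1) := by
  simp [ascPochhammer_succ_left, Polynomial.eval_comp]

theorem ascPochhammer_eval_mul_add_natCast (n : ℕ) (s : R) :
    (ascPochhammer R n).eval s * (s + n) = s * (ascPochhammer R n).eval (s + 1) := by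
  rw [← ascPochhammer_succ_eval, ascPochhammer_succ_eval_left]

theorem ascPochhammer_eval_eq_prod_range (n : ℕ) (s : R) :
    (ascPochhammer R n).eval s = ∏ j ∈ Finset.range n, (s + j) := by
  induction n with
  | zero => simp
  | succ n ih => rw [ascPochhammer_succ_eval, ih, Finset.prod_range_succ]

end AscPochhammer

theorem add_one_ne_neg_natCast {R : Type*} [Ring R] {s : R} (hs : ∀ m : ℕ, s ≠ -(m : R)) (m : ℕ) :
    s + 1 ≠ -(m : R) := fun h =>
  hs (m + 1) (by rw [eq_sub_of_add_eq h]; push_cast; abel)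

theorem tendsto_cpow_mul_factorial_div_ascPochhammer (s : ℂ) :
    Tendsto (fun n : ℕ => (n : ℂ) ^ (s - 1) * n ! / (ascPochhammer ℂ n).eval s) atTop
      (𝓝 (Complex.Gamma s)) := by
  have ratio_tendsto : Tendsto (fun n : ℕ => ((n : ℂ) / (n + s))⁻¹) atTop (𝓝 1) := by
    simpa using (tendsto_natCast_div_add_atTop s).inv₀ one_ne_zero
  rw [← mul_one (Complex.Gamma s)]
  refine ((Complex.GammaSeq_tendsto_Gamma s).mul ratio_tendsto).congr' ?_
  filter_upwards [eventually_ne_atTop 0, ratio_tendsto.eventually_ne one_ne_zero] with n hn hratio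
  have hn' : (n : ℂ) ≠ 0 := Nat.cast_ne_zero.mpr hn
  have hns : (n : ℂ) + s ≠ 0 := fun h => hratio (by rw [h, div_zero, inv_zero])
  rw [Complex.GammaSeq, ← ascPochhammer_eval_eq_prod_range, ascPochhammer_succ_eval,
    Complex.cpow_sub _ _ hn', Complex.cpow_one, add_comm s]
  field_simp

theorem factorial_complex_isTheta_real :
    (fun n : ℕ => (n ! : ℂ)) =Θ[atTop] fun n : ℕ => (n ! : ℝ) :=
  .of_norm_eventuallyEq <| .of_forall fun n => by simp

theorem ascPochhammer_eval_isTheta {s : ℂ} (hs : ∀ m : ℕ, s ≠ -(m : ℂ)) :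
    (fun n : ℕ => (ascPochhammer ℂ n).eval s) =Θ[atTop]
      fun n : ℕ => (n : ℝ) ^ (s.re - 1) * n ! := by
  have cpow_isTheta : (fun n : ℕ => (n : ℂ) ^ (s - 1)) =Θ[atTop]
      fun n : ℕ => (n : ℝ) ^ (s.re - 1) :=
    .of_norm_eventuallyEq <| (eventually_gt_atTop 0).mono fun n hn => by
      simp [Complex.norm_natCast_cpow_of_pos hn]
  exact (isTheta_of_div_tendsto_nhds_ne_zero (tendsto_cpow_mul_factorial_div_ascPochhammer s)
    (Complex.Gamma_ne_zero hs)).trans (cpow_isTheta.mul factorial_complex_isTheta_real)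

theorem ascPochhammer_eval_isBigO (s : ℂ) :
    (fun n : ℕ => (ascPochhammer ℂ n).eval s) =O[atTop]
      fun n : ℕ => (n : ℝ) ^ (s.re - 1) * n ! := by
  by_cases! hs : ∀ m : ℕ, s ≠ -(m : ℂ)
  · exact (ascPochhammer_eval_isTheta hs).isBigO
  · obtain ⟨m, rfl⟩ := hs
    refine .of_norm_eventuallyLE ?_
    filter_upwards [eventually_gt_atTop m] with n hn
    rw [ascPochhammer_eval_neg_coe_nat_of_lt hn, norm_zero]
    positivity

/-- The general term `(a)ₙ(b)ₙ(c)ₙ / ((d)ₙ(e)ₙ n!)` of the series `₃F₂(a, b, c; d, e; 1)`, with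
values in an arbitrary field; it is `0` when `(d)ₙ(e)ₙ n!` vanishes. -/
noncomputable def hyp3F2Term {K : Type*} [Field K] (a b c d e : K) (n : ℕ) : K :=
  ((ascPochhammer K n).eval a * (ascPochhammer K n).eval b * (ascPochhammer K n).eval c) /
    ((ascPochhammer K n).eval d * (ascPochhammer K n).eval e * (n ! : K))

section Term

variable {K : Type*} [Field K]

theorem hyp3F2Term_eq_add_natCast_mul (a b c d : K) {e : K} (he : ∀ m : ℕ, e ≠ -(m : K)) (n : ℕ) :
    hyp3F2Term a b c d e n =
      hyp3F2Term a b c d (e + 1) n + e⁻¹ * (n * hyp3F2Term a b c d (e + 1) n) := by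
  have he_zero : e ≠ 0 := by simpa using he 0
  have he_add : e + n ≠ 0 := fun h => he n (eq_neg_of_add_eq_zero_left h)
  have eval_eq : (ascPochhammer K n).eval e = e * (ascPochhammer K n).eval (e + 1) / (e + n) :=
    eq_div_of_mul_eq he_add (ascPochhammer_eval_mul_add_natCast n e)
  rw [hyp3F2Term, hyp3F2Term, eval_eq]
  field_simp

theorem natCast_succ_mul_hyp3F2Term_succ [CharZero K] (a b c d e : K) (n : ℕ) :
    ((n + 1 : ℕ) : K) * hyp3F2Term a b c d e (n + 1) =
      a * b * c / (d * e) * hyp3F2Term (a + 1) (b + 1) (c + 1) (d + 1) (e + 1) n := by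
  have hn : ((n + 1 : ℕ) : K) ≠ 0 := Nat.cast_ne_zero.mpr n.succ_ne_zero
  simp only [hyp3F2Term, ascPochhammer_succ_eval_left, Nat.factorial_succ, Nat.cast_mul]
  rw [mul_div_assoc', div_mul_div_comm, ← mul_div_mul_left (a * b * c * _) _ hn]
  congr 1 <;> ring

end Term

section Series

variable {a b c d e : ℂ}

variable (a b c) in
theorem hyp3F2Term_isBigO (hd : ∀ m : ℕ, d ≠ -(m : ℂ)) (he : ∀ m : ℕ, e ≠ -(m : ℂ)) :
    hyp3F2Term a b c d e =O[atTop] fun n : ℕ => (n : ℝ) ^ (-(d + e - a - b - c).re - 1) := by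
  have numerator_isBigO := ((ascPochhammer_eval_isBigO a).mul (ascPochhammer_eval_isBigO b)).mul
    (ascPochhammer_eval_isBigO c)
  have denominator_isTheta := ((ascPochhammer_eval_isTheta hd).mul
    (ascPochhammer_eval_isTheta he)).mul factorial_complex_isTheta_real
  refine (numerator_isBigO.mul denominator_isTheta.inv.isBigO).congr' (.of_forall fun n => ?_) ?_
  · rw [hyp3F2Term, div_eq_mul_inv]
  · filter_upwards [eventually_gt_atTop 0] with n hn
    have hn' : (0 : ℝ) < n := Nat.cast_pos.mpr hn
    have hf : (n ! : ℝ) ≠ 0 := Nat.cast_ne_zero.mpr n.factorial_ne_zero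
    have exponent_eq : -(d + e - a - b - c).re - 1 =
        (a.re - 1) + (b.re - 1) + (c.re - 1) - ((d.re - 1) + (e.re - 1)) := by
      simp only [Complex.add_re, Complex.sub_re]
      ring
    have rpow_eq : (n : ℝ) ^ (-(d + e - a - b - c).re - 1) =
        n ^ (a.re - 1) * n ^ (b.re - 1) * n ^ (c.re - 1) /
          (n ^ (d.re - 1) * n ^ (e.re - 1)) := by
      simp only [exponent_eq, ← Real.rpow_add hn', ← Real.rpow_sub hn']
    rw [rpow_eq]
    field_simp

theorem hasSum_hyp3F2 (hd : ∀ m : ℕ, d ≠ -(m : ℂ)) (he : ∀ m : ℕ, e ≠ -(m : ℂ))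
    (hs : 0 < (d + e - a - b - c).re) :
    HasSum (hyp3F2Term a b c d e) (hyp3F2 a b c d e) :=
  (summable_of_isBigO_nat (Real.summable_nat_rpow.mpr (by linarith))
    (hyp3F2Term_isBigO a b c hd he)).hasSum

theorem hasSum_natCast_mul_hyp3F2Term (hd : ∀ m : ℕ, d ≠ -(m : ℂ)) (he : ∀ m : ℕ, e ≠ -(m : ℂ))
    (hs : 1 < (d + e - a - b - c).re) :
    HasSum (fun n : ℕ => (n : ℂ) * hyp3F2Term a b c d e n)
      (a * b * c / (d * e) * hyp3F2 (a + 1) (b + 1) (c + 1) (d + 1) (e + 1)) := by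
  have raised_hasSum := hasSum_hyp3F2 (a := a + 1) (b := b + 1) (c := c + 1)
    (add_one_ne_neg_natCast hd) (add_one_ne_neg_natCast he)
    (by simp only [Complex.add_re, Complex.sub_re, Complex.one_re] at hs ⊢; linarith)
  rw [← hasSum_nat_add_iff' 1]
  simpa only [natCast_succ_mul_hyp3F2Term_succ, Finset.sum_range_one, Nat.cast_zero, zero_mul,
    sub_zero] using raised_hasSum.mul_left (a * b * c / (d * e))

end Series

theorem watson_contiguous_17_general (a b c d e : ℂ)
    (hd : ∀ m : ℕ, d ≠ -(m : ℂ)) (he : ∀ m : ℕ, e ≠ -(m : ℂ))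
    (hs : 0 < (d + e - a - b - c).re) :
    hyp3F2 a b c d e = hyp3F2 a b c d (e + 1) +
      a * b * c / (d * e * (e + 1)) *
        hyp3F2 (a + 1) (b + 1) (c + 1) (d + 1) (e + 2) := by
  have hs' : 1 < (d + (e + 1) - a - b - c).re := by
    simp only [Complex.add_re, Complex.sub_re, Complex.one_re] at hs ⊢
    linarith
  have he' := add_one_ne_neg_natCast he
  have termwise_hasSum := (hasSum_hyp3F2 hd he' (zero_lt_one.trans hs')).add
    ((hasSum_natCast_mul_hyp3F2Term hd he' hs').mul_left e⁻¹)
  simp only [← hyp3F2Term_eq_add_natCast_mul a b c d he] at termwise_hasSum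
  rw [(hasSum_hyp3F2 hd he hs).unique termwise_hasSum, add_assoc e, one_add_one_eq_two,
    ← mul_assoc, inv_mul_eq_div, div_div, mul_right_comm d]

theorem watson_contiguous_17 (a b c : ℂ)
    (hd : ∀ m : ℕ, (a + b + 3) / 2 ≠ -(m : ℂ))
    (he : ∀ m : ℕ, 2 * c - 1 ≠ -(m : ℂ))
    (hre : (2 * c - a - b).re > 0) :
    hyp3F2 a b c ((a + b + 3) / 2) (2 * c - 1) =
      hyp3F2 a b c ((a + b + 3) / 2) (2 * c) +
        a * b / ((2 * c - 1) * (a + b + 3)) *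
          hyp3F2 (a + 1) (b + 1) (c + 1) ((a + b + 5) / 2) (2 * c + 1) := by
  have hs : 0 < ((a + b + 3) / 2 + (2 * c - 1) - a - b - c).re := by
    have excess_eq : (a + b + 3) / 2 + (2 * c - 1) - a - b - c = (2 * c - a - b + 1) / 2 := by ring
    rw [excess_eq, Complex.div_ofNat_re, Complex.add_re, Complex.one_re]
    positivity
  have hc : c ≠ 0 := fun h => he 1 (by simp [h])
  have coeff_eq : a * b * c / ((a + b + 3) / 2 * (2 * c - 1) * (2 * c)) =
      a * b / ((2 * c - 1) * (a + b + 3)) := by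
    field_simp
  have contiguous := watson_contiguous_17_general a b c ((a + b + 3) / 2) (2 * c - 1) hd he hs
  rwa [sub_add_cancel, coeff_eq, show (a + b + 3) / 2 + 1 = (a + b + 5) / 2 by ring,
    show 2 * c - 1 + 2 = 2 * c + 1 by ring] at contiguous
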